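/- arXiv:math/0512202 — 2 statements merged into one kernel-verified Lean document; each statement's English description precedes it below -/
import Mathlib

section
/- Every finite-dimensional graded simple algebra over an arbitrary field is unitary, i.e., possesses a two-sided multiplicative identity. -/
/-!
Simplicity enters only through semiprimeness: the two-sided ideal `{z | z L = 0}` attached to a
graded left ideal `L` with `L² = 0` contains `L`, so if `L ≠ 0` it is everything, and then `L` lies
in the graded two-sided ideal `{z | R z = 0}`, which is zero because `R² ≠ 0`.

In a minimal graded left ideal `L` with `L² ≠ 0`, pick a homogeneous `a` with `L a ≠ 0`. By
minimality `x ↦ x a` is a bijection of `L`, and the degree-one component `e` of the solution of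
`x a = a` is an idempotent. Now choose an idempotent `e` of degree one with smallest left
annihilator `{x | x e = 0}`. If this graded left ideal were nonzero it would contain an idempotent
`f ≠ 0` of degree one, and `e + f - e f` would be an idempotent with smaller left annihilator.
Hence `(x e - x) e = 0` gives `x e = x`. So `R (e x - x) = 0` for all `x`, and semiprimeness gives
`e x = x`.
-/

open DirectSum

section Components

variable {ι R σ : Type*} [DecidableEq ι] [NonUnitalNonAssocSemiring R] [SetLike σ R]
  [AddSubmonoidClass σ R] {𝒜 : ι → σ} [Decomposition 𝒜]

theorem exists_mul_coe_decompose_ne_zero {x y : R} (hxy : x * y ≠ 0) :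
    ∃ i, x * (decompose 𝒜 y i : R) ≠ 0 := by
  classical
  contrapose! hxy
  rw [← sum_support_decompose 𝒜 y, Finset.mul_sum]
  exact Finset.sum_eq_zero fun i _ ↦ hxy i

variable [Mul ι] (hmul : ∀ i j : ι, ∀ x ∈ 𝒜 i, ∀ y ∈ 𝒜 j, x * y ∈ 𝒜 (i * j))
include hmul

theorem coe_decompose_mul_mul_of_right_mem [IsRightCancelMul ι] {j : ι} {a : R} (ha : a ∈ 𝒜 j)
    (i : ι) (x : R) : (decompose 𝒜 (x * a) (i * j) : R) = decompose 𝒜 x i * a := by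
  induction x using Decomposition.inductionOn 𝒜 with
  | zero => simp
  | @homogeneous k x =>
    have hxa := hmul k j x x.2 a ha
    obtain rfl | hki := eq_or_ne k i
    · rw [decompose_of_mem_same 𝒜 hxa, decompose_of_mem_same 𝒜 x.2]
    · rw [decompose_of_mem_ne 𝒜 hxa (by simpa using hki), decompose_of_mem_ne 𝒜 x.2 hki, zero_mul]
  | add x y hx hy => simp [add_mul, hx, hy]

theorem coe_decompose_mul_mul_of_left_mem [IsLeftCancelMul ι] {i : ι} {a : R} (ha : a ∈ 𝒜 i)
    (j : ι) (x : R) : (decompose 𝒜 (a * x) (i * j) : R) = a * decompose 𝒜 x j := by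
  induction x using Decomposition.inductionOn 𝒜 with
  | zero => simp
  | @homogeneous k x =>
    have hax := hmul i k a ha x x.2
    obtain rfl | hkj := eq_or_ne k j
    · rw [decompose_of_mem_same 𝒜 hax, decompose_of_mem_same 𝒜 x.2]
    · rw [decompose_of_mem_ne 𝒜 hax (by simpa using hkj), decompose_of_mem_ne 𝒜 x.2 hkj, mul_zero]
  | add x y hx hy => simp [mul_add, hx, hy]

theorem coe_decompose_mul_of_right_mem_of_forall_ne {j k : ι} {a : R} (ha : a ∈ 𝒜 j)
    (hk : ∀ i, i * j ≠ k) (x : R) : (decompose 𝒜 (x * a) k : R) = 0 := by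
  induction x using Decomposition.inductionOn 𝒜 with
  | zero => simp
  | @homogeneous i x => exact decompose_of_mem_ne 𝒜 (hmul i j x x.2 a ha) (hk i)
  | add x y hx hy => simp [add_mul, hx, hy]

end Components

section LeftIdeals

variable {ι k R σ : Type*} [DecidableEq ι] [Semiring k] [NonUnitalSemiring R] [Module k R]
  [SetLike σ R] [AddSubmonoidClass σ R] {𝒜 : ι → σ} [Decomposition 𝒜]

/-- `L` is a graded left ideal of the graded algebra `R = ⨁ i, 𝒜 i`. As `R` need not have an
identity, stability of `L` under the scalars `k` is a separate requirement, which is encoded in the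
type of `L`. -/
structure IsGradedLeftIdeal (𝒜 : ι → σ) [Decomposition 𝒜] (L : Submodule k R) : Prop where
  mul_mem : ∀ (r : R) {x : R}, x ∈ L → r * x ∈ L
  isHomogeneous : SetLike.IsHomogeneous 𝒜 L

variable {L L' : Submodule k R}

theorem IsGradedLeftIdeal.inf (hL : IsGradedLeftIdeal 𝒜 L) (hL' : IsGradedLeftIdeal 𝒜 L') :
    IsGradedLeftIdeal 𝒜 (L ⊓ L') where
  mul_mem r _ hx := ⟨hL.mul_mem r hx.1, hL'.mul_mem r hx.2⟩
  isHomogeneous i _ hx := ⟨hL.isHomogeneous i hx.1, hL'.isHomogeneous i hx.2⟩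

variable [IsScalarTower k R R] [Mul ι] [IsRightCancelMul ι]
  (hmul : ∀ i j : ι, ∀ x ∈ 𝒜 i, ∀ y ∈ 𝒜 j, x * y ∈ 𝒜 (i * j)) {j : ι} {a : R} (ha : a ∈ 𝒜 j)
include hmul ha

theorem IsGradedLeftIdeal.ker_mulRight :
    IsGradedLeftIdeal 𝒜 (LinearMap.ker (LinearMap.mulRight k a)) where
  mul_mem r x hx := by
    rw [LinearMap.mem_ker, LinearMap.mulRight_apply] at hx ⊢
    rw [mul_assoc, hx, mul_zero]
  isHomogeneous i x hx := by
    rw [LinearMap.mem_ker, LinearMap.mulRight_apply] at hx ⊢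
    rw [← coe_decompose_mul_mul_of_right_mem hmul ha, hx, decompose_zero, DirectSum.zero_apply,
      ZeroMemClass.coe_zero]

theorem IsGradedLeftIdeal.map_mulRight (hL : IsGradedLeftIdeal 𝒜 L) :
    IsGradedLeftIdeal 𝒜 (L.map (LinearMap.mulRight k a)) where
  mul_mem := by
    rintro r _ ⟨x, hx, rfl⟩
    exact ⟨r * x, hL.mul_mem r hx, mul_assoc r x a⟩
  isHomogeneous := by
    rintro i _ ⟨x, hx, rfl⟩
    rw [LinearMap.mulRight_apply]
    by_cases hi : ∃ l, l * j = i
    · obtain ⟨l, rfl⟩ := hi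
      exact ⟨decompose 𝒜 x l, hL.isHomogeneous l hx,
        (coe_decompose_mul_mul_of_right_mem hmul ha l x).symm⟩
    · rw [coe_decompose_mul_of_right_mem_of_forall_ne hmul ha (not_exists.1 hi)]
      exact zero_mem _

variable (hL : Minimal (fun N : Submodule k R ↦ IsGradedLeftIdeal 𝒜 N ∧ N ≠ ⊥) L)
  {x : R} (hx : x ∈ L) (hxa : x * a ≠ 0)
include hL hx hxa

theorem map_mulRight_eq_of_minimal (haL : a ∈ L) : L.map (LinearMap.mulRight k a) = L := by
  refine hL.eq_of_le ⟨hL.prop.1.map_mulRight hmul ha, ?_⟩ ?_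
  · exact (Submodule.ne_bot_iff _).2 ⟨x * a, ⟨x, hx, rfl⟩, hxa⟩
  · rintro _ ⟨y, -, rfl⟩
    exact hL.prop.1.mul_mem y haL

theorem inf_ker_mulRight_eq_bot_of_minimal :
    L ⊓ LinearMap.ker (LinearMap.mulRight k a) = ⊥ := by
  by_contra hne
  have hLker : L ≤ LinearMap.ker (LinearMap.mulRight k a) :=
    inf_eq_left.1 (hL.eq_of_le ⟨hL.prop.1.inf (.ker_mulRight hmul ha), hne⟩ inf_le_left)
  exact hxa (hLker hx)

end LeftIdeals

section Simple

variable {ι R σ : Type*} [DecidableEq ι] [NonUnitalRing R]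
  [SetLike σ R] [AddSubmonoidClass σ R] {𝒜 : ι → σ} [Decomposition 𝒜]

/-- The graded ring `R = ⨁ i, 𝒜 i` is graded simple: `R² ≠ 0` and `R` has no nonzero proper graded
two-sided ideal. -/
structure IsGradedSimple (𝒜 : ι → σ) [Decomposition 𝒜] : Prop where
  exists_mul_ne_zero : ∃ x y : R, x * y ≠ 0
  eq_bot_or_eq_top : ∀ I : TwoSidedIdeal R, SetLike.IsHomogeneous 𝒜 I → I = ⊥ ∨ I = ⊤

/-- The graded algebra `R = ⨁ i, 𝒜 i` is graded semiprime over `k`: it has no nonzero graded left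
ideal of square zero. The scalars `k` enter through the notion of left ideal. -/
def IsGradedSemiprime (k : Type*) [Semiring k] [Module k R] (𝒜 : ι → σ) [Decomposition 𝒜] : Prop :=
  ∀ L : Submodule k R, IsGradedLeftIdeal 𝒜 L → (∀ x ∈ L, ∀ y ∈ L, x * y = 0) → L = ⊥

variable (R) in
/-- The two-sided ideal `{z | R z = 0}`. -/
def rightAnnihilator : TwoSidedIdeal R :=
  .mk' {z | ∀ r, r * z = 0} mul_zero
    (fun hx hy r ↦ by rw [mul_add, hx r, hy r, add_zero])
    (fun hx r ↦ by rw [mul_neg, hx r, neg_zero])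
    (fun {s _} hx r ↦ by rw [← mul_assoc, hx (r * s)])
    (fun hx r ↦ by rw [← mul_assoc, hx r, zero_mul])

theorem mem_rightAnnihilator {z : R} : z ∈ rightAnnihilator R ↔ ∀ r, r * z = 0 :=
  TwoSidedIdeal.mem_mk' ..

/-- The two-sided ideal `{z | z L = 0}` attached to a graded left ideal `L`. -/
def IsGradedLeftIdeal.annihilator {k : Type*} [Semiring k] [Module k R] {L : Submodule k R}
    (hL : IsGradedLeftIdeal 𝒜 L) : TwoSidedIdeal R :=
  .mk' {z | ∀ y ∈ L, z * y = 0} (fun y _ ↦ zero_mul y)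
    (fun hx hx' y hy ↦ by rw [add_mul, hx y hy, hx' y hy, add_zero])
    (fun hx y hy ↦ by rw [neg_mul, hx y hy, neg_zero])
    (fun hx y hy ↦ by rw [mul_assoc, hx y hy, mul_zero])
    (fun {_ r} hx y hy ↦ by rw [mul_assoc, hx (r * y) (hL.mul_mem r hy)])

theorem IsGradedLeftIdeal.mem_annihilator {k : Type*} [Semiring k] [Module k R]
    {L : Submodule k R} (hL : IsGradedLeftIdeal 𝒜 L) {z : R} :
    z ∈ hL.annihilator ↔ ∀ y ∈ L, z * y = 0 :=
  TwoSidedIdeal.mem_mk' ..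

variable [Mul ι] (hmul : ∀ i j : ι, ∀ x ∈ 𝒜 i, ∀ y ∈ 𝒜 j, x * y ∈ 𝒜 (i * j))
include hmul

theorem isHomogeneous_rightAnnihilator [IsLeftCancelMul ι] :
    SetLike.IsHomogeneous 𝒜 (rightAnnihilator R) := by
  intro j z hz
  rw [mem_rightAnnihilator] at hz ⊢
  intro r
  induction r using Decomposition.inductionOn 𝒜 with
  | zero => exact zero_mul _
  | @homogeneous i r =>
    rw [← coe_decompose_mul_mul_of_left_mem hmul r.2, hz, decompose_zero, DirectSum.zero_apply,
      ZeroMemClass.coe_zero]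
  | add r s hr hs => rw [add_mul, hr, hs, add_zero]

theorem IsGradedLeftIdeal.isHomogeneous_annihilator [IsRightCancelMul ι] {k : Type*} [Semiring k]
    [Module k R] {L : Submodule k R} (hL : IsGradedLeftIdeal 𝒜 L) :
    SetLike.IsHomogeneous 𝒜 hL.annihilator := by
  intro i z hz
  rw [hL.mem_annihilator] at hz ⊢
  intro y hy
  by_contra hzy
  obtain ⟨j, hj⟩ := exists_mul_coe_decompose_ne_zero (𝒜 := 𝒜) hzy
  apply hj
  rw [← coe_decompose_mul_mul_of_right_mem hmul (decompose 𝒜 y j).2, hz _ (hL.isHomogeneous j hy),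
    decompose_zero, DirectSum.zero_apply, ZeroMemClass.coe_zero]

theorem IsGradedSimple.rightAnnihilator_eq_bot [IsLeftCancelMul ι] (h𝒜 : IsGradedSimple 𝒜) :
    rightAnnihilator R = ⊥ := by
  refine (h𝒜.eq_bot_or_eq_top _ (isHomogeneous_rightAnnihilator hmul)).resolve_right fun htop ↦ ?_
  obtain ⟨x, y, hxy⟩ := h𝒜.exists_mul_ne_zero
  exact hxy (mem_rightAnnihilator.1 (htop ▸ TwoSidedIdeal.mem_top R) x)

theorem IsGradedSimple.isGradedSemiprime [IsCancelMul ι] (k : Type*) [Semiring k] [Module k R]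
    (h𝒜 : IsGradedSimple 𝒜) : IsGradedSemiprime k 𝒜 := by
  intro L hL hsq
  refine (Submodule.eq_bot_iff L).2 fun y hy ↦ ?_
  obtain hbot | htop := h𝒜.eq_bot_or_eq_top _ (hL.isHomogeneous_annihilator hmul)
  · exact (TwoSidedIdeal.mem_bot R).1 (hbot ▸ hL.mem_annihilator.2 (hsq y hy))
  · have hRy : y ∈ rightAnnihilator R :=
      mem_rightAnnihilator.2 fun r ↦ hL.mem_annihilator.1 (htop ▸ TwoSidedIdeal.mem_top R) y hy
    exact (TwoSidedIdeal.mem_bot R).1 (h𝒜.rightAnnihilator_eq_bot hmul ▸ hRy)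

theorem IsGradedSemiprime.eq_zero_of_forall_mul_eq_zero [IsLeftCancelMul ι] {k : Type*}
    [Semiring k] [Module k R] [SMulCommClass k R R] (h𝒜 : IsGradedSemiprime k 𝒜) {z : R}
    (hz : ∀ r, r * z = 0) : z = 0 := by
  let K : Submodule k R :=
    { carrier := rightAnnihilator R
      zero_mem' := zero_mem _
      add_mem' := add_mem
      smul_mem' c x hx := mem_rightAnnihilator.2 fun r ↦ by
        rw [mul_smul_comm, mem_rightAnnihilator.1 hx r, smul_zero] }
  have hK : IsGradedLeftIdeal 𝒜 K :=
    ⟨(rightAnnihilator R).mul_mem_left, isHomogeneous_rightAnnihilator hmul⟩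
  have hKbot : K = ⊥ := h𝒜 K hK fun x _ y hy ↦ mem_rightAnnihilator.1 hy x
  exact (Submodule.eq_bot_iff K).1 hKbot z (mem_rightAnnihilator.2 hz)

end Simple

section Idempotents

variable {R : Type*} [NonUnitalRing R] {e f : R}

theorem add_sub_mul_mul_left_of_mul_eq_zero (he : IsIdempotentElem e) (hfe : f * e = 0) :
    (e + f - e * f) * e = e := by
  rw [sub_mul, add_mul, mul_assoc, hfe, mul_zero, he.eq, add_zero, sub_zero]

theorem add_sub_mul_mul_right (hf : IsIdempotentElem f) (e : R) : (e + f - e * f) * f = f := by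
  rw [sub_mul, add_mul, mul_assoc, hf.eq, add_sub_cancel_left]

theorem isIdempotentElem_add_sub_mul_of_mul_eq_zero (he : IsIdempotentElem e)
    (hf : IsIdempotentElem f) (hfe : f * e = 0) : IsIdempotentElem (e + f - e * f) := by
  rw [IsIdempotentElem, mul_sub, mul_add, ← mul_assoc _ e f,
    add_sub_mul_mul_left_of_mul_eq_zero he hfe, add_sub_mul_mul_right hf]

theorem ker_mulRight_add_sub_mul_lt {k : Type*} [Semiring k] [Module k R] [IsScalarTower k R R]
    (he : IsIdempotentElem e) (hf : IsIdempotentElem f) (hfe : f * e = 0) (hf0 : f ≠ 0) :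
    LinearMap.ker (LinearMap.mulRight k (e + f - e * f)) <
      LinearMap.ker (LinearMap.mulRight k e) := by
  simp only [SetLike.lt_iff_le_and_exists, SetLike.le_def, LinearMap.mem_ker,
    LinearMap.mulRight_apply]
  refine ⟨fun z hz ↦ ?_, f, hfe, ?_⟩
  · rw [← add_sub_mul_mul_left_of_mul_eq_zero he hfe, ← mul_assoc, hz, zero_mul]
  · rwa [mul_sub, mul_add, ← mul_assoc, hfe, zero_mul, sub_zero, zero_add, hf.eq]

end Idempotents

section Identity

variable {ι k R σ : Type*} [DecidableEq ι] [Monoid ι] [IsRightCancelMul ι] [Ring k]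
  [NonUnitalRing R] [Module k R] [IsScalarTower k R R] [SetLike σ R] {𝒜 : ι → σ}

section Minimal

variable [AddSubmonoidClass σ R] [Decomposition 𝒜]
  (hmul : ∀ i j : ι, ∀ x ∈ 𝒜 i, ∀ y ∈ 𝒜 j, x * y ∈ 𝒜 (i * j))
include hmul

theorem exists_isIdempotentElem_mem_of_minimal {L : Submodule k R}
    (hL : Minimal (fun N : Submodule k R ↦ IsGradedLeftIdeal 𝒜 N ∧ N ≠ ⊥) L)
    (hsq : ∃ x ∈ L, ∃ y ∈ L, x * y ≠ 0) :
    ∃ e ∈ L, e ∈ 𝒜 1 ∧ e ≠ 0 ∧ IsIdempotentElem e := by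
  obtain ⟨x, hx, y, hy, hxy⟩ := hsq
  obtain ⟨j, hxyj⟩ := exists_mul_coe_decompose_ne_zero (𝒜 := 𝒜) hxy
  obtain ⟨hideal, -⟩ := hL.prop
  obtain ⟨a, ha, haL, hxa⟩ : ∃ a ∈ 𝒜 j, a ∈ L ∧ x * a ≠ 0 :=
    ⟨_, (decompose 𝒜 y j).2, hideal.isHomogeneous j hy, hxyj⟩
  obtain ⟨b, hb, hba⟩ : a ∈ L.map (LinearMap.mulRight k a) :=
    (map_mulRight_eq_of_minimal hmul ha hL hx hxa haL).symm ▸ haL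
  rw [LinearMap.mulRight_apply] at hba
  obtain ⟨e, heL, he1, hea⟩ : ∃ e ∈ L, e ∈ 𝒜 1 ∧ e * a = a := by
    refine ⟨_, hideal.isHomogeneous 1 hb, (decompose 𝒜 b 1).2, ?_⟩
    rw [← coe_decompose_mul_mul_of_right_mem hmul ha, hba, one_mul, decompose_of_mem_same 𝒜 ha]
  have he0 : e ≠ 0 := fun h ↦ hxa (by rw [← hea, h, zero_mul, mul_zero])
  have hker : e * e - e ∈ L ⊓ LinearMap.ker (LinearMap.mulRight k a) := by
    refine ⟨sub_mem (hideal.mul_mem e heL) heL, ?_⟩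
    rw [SetLike.mem_coe, LinearMap.mem_ker, LinearMap.mulRight_apply, sub_mul, mul_assoc, hea, hea,
      sub_self]
  rw [inf_ker_mulRight_eq_bot_of_minimal hmul ha hL hx hxa, Submodule.mem_bot] at hker
  exact ⟨e, heL, he1, he0, sub_eq_zero.1 hker⟩

variable (hsemi : IsGradedSemiprime k 𝒜)
  (hwf : {L : Submodule k R | IsGradedLeftIdeal 𝒜 L}.IsWF)
include hsemi hwf

theorem IsGradedLeftIdeal.exists_isIdempotentElem_mem {L : Submodule k R}
    (hL : IsGradedLeftIdeal 𝒜 L) (hL0 : L ≠ ⊥) :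
    ∃ e ∈ L, e ∈ 𝒜 1 ∧ e ≠ 0 ∧ IsIdempotentElem e := by
  obtain ⟨N, ⟨hN, hN0, hNL⟩, hmin⟩ :=
    (hwf.mono (s := {N | IsGradedLeftIdeal 𝒜 N ∧ N ≠ ⊥ ∧ N ≤ L}) fun _ h ↦ h.1).exists_minimal
      ⟨L, hL, hL0, le_rfl⟩
  have hNmin : Minimal (fun N' : Submodule k R ↦ IsGradedLeftIdeal 𝒜 N' ∧ N' ≠ ⊥) N :=
    ⟨⟨hN, hN0⟩, fun N' hN' hle ↦ hmin ⟨hN'.1, hN'.2, hle.trans hNL⟩ hle⟩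
  have hsq : ∃ x ∈ N, ∃ y ∈ N, x * y ≠ 0 := by
    contrapose! hN0
    exact hsemi N hN hN0
  obtain ⟨e, heN, he⟩ := exists_isIdempotentElem_mem_of_minimal hmul hNmin hsq
  exact ⟨e, hNL heN, he⟩

end Minimal

variable [AddSubgroupClass σ R] [Decomposition 𝒜]

theorem exists_isIdempotentElem_ker_mulRight_eq_bot
    (hmul : ∀ i j : ι, ∀ x ∈ 𝒜 i, ∀ y ∈ 𝒜 j, x * y ∈ 𝒜 (i * j))
    (hsemi : IsGradedSemiprime k 𝒜)
    (hwf : {L : Submodule k R | IsGradedLeftIdeal 𝒜 L}.IsWF) :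
    ∃ e : R, IsIdempotentElem e ∧ LinearMap.ker (LinearMap.mulRight k e) = ⊥ := by
  let S : Set (Submodule k R) :=
    {K | ∃ e ∈ 𝒜 1, IsIdempotentElem e ∧ LinearMap.ker (LinearMap.mulRight k e) = K}
  have hS : S ⊆ {L | IsGradedLeftIdeal 𝒜 L} := by
    rintro _ ⟨e, he1, -, rfl⟩
    exact .ker_mulRight hmul he1
  obtain ⟨_, hmin⟩ := (hwf.mono hS).exists_minimal ⟨_, 0, zero_mem _, .zero, rfl⟩
  obtain ⟨e, he1, he, rfl⟩ := hmin.prop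
  refine ⟨e, he, ?_⟩
  by_contra hker
  obtain ⟨f, hfe, hf1, hf0, hf⟩ :=
    (IsGradedLeftIdeal.ker_mulRight hmul he1).exists_isIdempotentElem_mem hmul hsemi hwf hker
  rw [LinearMap.mem_ker, LinearMap.mulRight_apply] at hfe
  have hef1 : e * f ∈ 𝒜 1 := one_mul (1 : ι) ▸ hmul 1 1 e he1 f hf1
  exact hmin.not_lt ⟨_, sub_mem (add_mem he1 hf1) hef1,
    isIdempotentElem_add_sub_mul_of_mul_eq_zero he hf hfe, rfl⟩
    (ker_mulRight_add_sub_mul_lt he hf hfe hf0)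

theorem stmt_2_general [IsLeftCancelMul ι] [SMulCommClass k R R]
    (hmul : ∀ i j : ι, ∀ x ∈ 𝒜 i, ∀ y ∈ 𝒜 j, x * y ∈ 𝒜 (i * j))
    (hsemi : IsGradedSemiprime k 𝒜)
    (hwf : {L : Submodule k R | IsGradedLeftIdeal 𝒜 L}.IsWF) :
    ∃ u : R, ∀ x : R, u * x = x ∧ x * u = x := by
  obtain ⟨e, he, hker⟩ := exists_isIdempotentElem_ker_mulRight_eq_bot hmul hsemi hwf
  have mul_e (x : R) : x * e = x := by
    refine sub_eq_zero.1 ((Submodule.eq_bot_iff _).1 hker _ ?_)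
    rw [LinearMap.mem_ker, LinearMap.mulRight_apply, sub_mul, mul_assoc, he.eq, sub_self]
  have e_mul (x : R) : e * x = x := by
    refine sub_eq_zero.1 (hsemi.eq_zero_of_forall_mul_eq_zero hmul fun r ↦ ?_)
    rw [mul_sub, ← mul_assoc, mul_e, sub_self]
  exact ⟨e, fun x ↦ ⟨e_mul x, mul_e x⟩⟩

end Identity

/-- A finite-dimensional graded simple algebra over an arbitrary field is unitary. -/
theorem stmt_2 {G : Type*} [Group G] [DecidableEq G] {F : Type*} [Field F]
    {R : Type*} [NonUnitalRing R] [Module F R] [SMulCommClass F R R] [IsScalarTower F R R]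
    [FiniteDimensional F R]
    (ℬ : G → Submodule F R) [DirectSum.Decomposition ℬ]
    (hmul : ∀ g h : G, ∀ x ∈ ℬ g, ∀ y ∈ ℬ h, x * y ∈ ℬ (g * h))
    -- graded simple:
    (hR2 : ∃ x y : R, x * y ≠ 0)
    (hsimple : ∀ I : TwoSidedIdeal R,
      (∀ x ∈ I, ∀ g : G, ((DirectSum.decompose ℬ x) g : R) ∈ I) → I = ⊥ ∨ I = ⊤) :
    ∃ u : R, ∀ x : R, u * x = x ∧ x * u = x := by
  have hℬ : IsGradedSimple ℬ := ⟨hR2, fun I hI ↦ hsimple I fun x hx g ↦ hI g hx⟩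
  exact stmt_2_general hmul (hℬ.isGradedSemiprime hmul F) (.of_wellFoundedLT _)
end

section
/- Let G be a finite group with |G| invertible in an algebraically closed field F. Then, for each n ≥ 1, there are up to graded isomorphism only finitely many n-dimensional G-graded simple algebras over F; in particular there are only finitely many finite-dimensional G-graded division algebras. -/
universe u v

/-- A "model" of a finite-dimensional `G`-graded `F`-algebra: a bilinear multiplication
and a `G`-indexed family of subspaces on the standard space `F^dim`. -/
structure GradedAlgModel (G : Type v) (F : Type u) [Group G] [Field F] where
  dim : ℕ
  mul : (Fin dim → F) →ₗ[F] (Fin dim → F) →ₗ[F] (Fin dim → F)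
  grading : G → Submodule F (Fin dim → F)

/-- `R` (with grading `ℬ`) is isomorphic, as a graded algebra, to the model `s`. -/
def IsGradedIsoToModel {G : Type v} [Group G] {F : Type u} [Field F]
    (R : Type u) [NonUnitalRing R] [Module F R]
    (ℬ : G → Submodule F R) (s : GradedAlgModel G F) : Prop :=
  ∃ e : R ≃ₗ[F] (Fin s.dim → F),
    (∀ x y : R, e (x * y) = s.mul (e x) (e y)) ∧
    ∀ g : G, (ℬ g).map (e : R →ₗ[F] (Fin s.dim → F)) = s.grading g

/-!
Let `R` be a graded simple algebra of finite dimension over an algebraically closed field `F`.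
A minimal graded left ideal of `R` is generated by a homogeneous idempotent `e` for which `e R e`
is a graded division algebra, and `R` is the algebra of `k × k` matrices over `e R e`, with a
grading shifted by a degree for each row. Every component of `e R e` has dimension at most one, so
`e R e` is a twisted group algebra of a subgroup `H` of `G`. Multiplying the cocycle identity over
its last argument shows that the `|H|`-th power of the twisting cocycle is a coboundary; as `F` has
all `|H|`-th roots, the cocycle can be chosen with values in the `|H|`-th roots of unity. Hence `R`
has a homogeneous basis whose structure constants lie in a finite set that only depends on `F` and
`|G|`, and there are only finitely many possible multiplication tables in each dimension.
-/

open DirectSum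

section HomogeneousComponent

variable {ι F M : Type*} [DecidableEq ι] [Semiring F] [AddCommMonoid M] [Module F M]
  (ℬ : ι → Submodule F M) [Decomposition ℬ]

/-- The projection of a graded module onto its component of degree `i`, as an endomorphism. -/
def homogeneousComponent (i : ι) : M →ₗ[F] M :=
  (ℬ i).subtype ∘ₗ DirectSum.component F ι (fun j => ℬ j) i ∘ₗ (decomposeLinearEquiv ℬ).toLinearMap

lemma homogeneousComponent_mem (i : ι) (x : M) : homogeneousComponent ℬ i x ∈ ℬ i :=
  (decompose ℬ x i).2

lemma homogeneousComponent_of_mem {i : ι} {x : M} (hx : x ∈ ℬ i) :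
    homogeneousComponent ℬ i x = x :=
  decompose_of_mem_same ℬ hx

lemma homogeneousComponent_of_mem_ne {i j : ι} {x : M} (hx : x ∈ ℬ i) (hij : i ≠ j) :
    homogeneousComponent ℬ j x = 0 :=
  decompose_of_mem_ne ℬ hx hij

lemma exists_homogeneousComponent_ne_zero {x : M} (hx : x ≠ 0) :
    ∃ i, homogeneousComponent ℬ i x ≠ 0 := by
  contrapose! hx
  refine (decomposeLinearEquiv ℬ).map_eq_zero_iff.mp (DFinsupp.ext fun i => Subtype.ext ?_)
  exact hx i

lemma exists_mem_map_ne_zero {N : Type*} [AddCommMonoid N] [Module F N] {f : M →ₗ[F] N}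
    (hf : f ≠ 0) : ∃ i, ∃ x ∈ ℬ i, f x ≠ 0 := by
  contrapose! hf
  exact decompose_lhom_ext ℬ fun i => LinearMap.ext fun x => hf i x x.2

lemma mem_of_forall_homogeneousComponent_mem {N : Submodule F M} {x : M}
    (hx : ∀ i, homogeneousComponent ℬ i x ∈ N) : x ∈ N := by
  classical
  rw [← sum_support_decompose ℬ x]
  exact sum_mem fun i _ => hx i

lemma eq_span_image_of_span_range_eq_top {κ : Type*} {v : κ → M} {deg : κ → ι}
    (hv : Submodule.span F (Set.range v) = ⊤) (hdeg : ∀ k, v k ∈ ℬ (deg k)) (i : ι) :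
    ℬ i = Submodule.span F (v '' {k | deg k = i}) := by
  apply le_antisymm
  · intro x hx
    have hx_map : x ∈ (Submodule.span F (Set.range v)).map (homogeneousComponent ℬ i) :=
      ⟨x, hv ▸ Submodule.mem_top, homogeneousComponent_of_mem ℬ hx⟩
    refine (Submodule.map_span_le _ _ _).mpr ?_ hx_map
    rintro _ ⟨k, rfl⟩
    by_cases hk : deg k = i
    · rw [homogeneousComponent_of_mem ℬ (hk ▸ hdeg k)]
      exact Submodule.subset_span ⟨k, hk, rfl⟩
    · rw [homogeneousComponent_of_mem_ne ℬ (hdeg k) hk]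
      exact Submodule.zero_mem _
  · rw [Submodule.span_le]
    rintro _ ⟨k, rfl, rfl⟩
    exact hdeg k

lemma linearIndependent_of_forall_mem {ι F M κ : Type*} [DecidableEq ι] [DivisionRing F]
    [AddCommGroup M] [Module F M] (ℬ : ι → Submodule F M) [Decomposition ℬ] {v : κ → M}
    {deg : κ → ι} (hdeg : Function.Injective deg) (hv : ∀ k, v k ∈ ℬ (deg k))
    (hv0 : ∀ k, v k ≠ 0) : LinearIndependent F v :=
  ((Decomposition.isInternal ℬ).submodule_iSupIndep.comp hdeg).linearIndependent _ hv hv0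

end HomogeneousComponent

section MulGraded

variable {G F R : Type*} [Group G] [Semiring F]

/-- The family `ℬ` of subspaces of an algebra is multiplicative. This is the analogue of
`SetLike.GradedMul` for degrees in a multiplicatively written group. -/
class IsMulGraded [NonUnitalNonAssocSemiring R] [Module F R] (ℬ : G → Submodule F R) : Prop where
  mul_mem : ∀ {g h : G} {x y : R}, x ∈ ℬ g → y ∈ ℬ h → x * y ∈ ℬ (g * h)

namespace IsMulGraded

variable [NonUnitalNonAssocSemiring R] [Module F R] (ℬ : G → Submodule F R) [IsMulGraded ℬ]
  {g : G} {x y : R}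

lemma mul_mem_of_mem_one_left (hx : x ∈ ℬ 1) (hy : y ∈ ℬ g) : x * y ∈ ℬ g := by
  simpa only [one_mul] using mul_mem hx hy

lemma mul_mem_of_mem_one_right (hx : x ∈ ℬ g) (hy : y ∈ ℬ 1) : x * y ∈ ℬ g := by
  simpa only [mul_one] using mul_mem hx hy

lemma mul_mem_one (hx : x ∈ ℬ g) (hy : y ∈ ℬ g⁻¹) : x * y ∈ ℬ 1 := by
  simpa only [mul_inv_cancel] using mul_mem hx hy

variable [DecidableEq G] [Decomposition ℬ]

lemma homogeneousComponent_mul_right (hy : y ∈ ℬ g) (k : G) (x : R) :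
    homogeneousComponent ℬ (k * g) (x * y) = homogeneousComponent ℬ k x * y := by
  induction x using Decomposition.inductionOn ℬ with
  | zero => simp only [zero_mul, map_zero]
  | @homogeneous h x =>
    by_cases hk : h = k
    · subst hk
      rw [homogeneousComponent_of_mem ℬ (mul_mem x.2 hy), homogeneousComponent_of_mem ℬ x.2]
    · rw [homogeneousComponent_of_mem_ne ℬ x.2 hk, zero_mul]
      exact homogeneousComponent_of_mem_ne ℬ (mul_mem x.2 hy) fun h => hk (mul_right_cancel h)
  | add x x' hx hx' => simp only [add_mul, map_add, hx, hx']

lemma homogeneousComponent_mul_left (hx : x ∈ ℬ g) (k : G) (y : R) :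
    homogeneousComponent ℬ (g * k) (x * y) = x * homogeneousComponent ℬ k y := by
  induction y using Decomposition.inductionOn ℬ with
  | zero => simp only [mul_zero, map_zero]
  | @homogeneous h y =>
    by_cases hk : h = k
    · subst hk
      rw [homogeneousComponent_of_mem ℬ (mul_mem hx y.2), homogeneousComponent_of_mem ℬ y.2]
    · rw [homogeneousComponent_of_mem_ne ℬ y.2 hk, mul_zero]
      exact homogeneousComponent_of_mem_ne ℬ (mul_mem hx y.2) fun h => hk (mul_left_cancel h)
  | add y y' hy hy' => simp only [mul_add, map_add, hy, hy']

lemma homogeneousComponent_mul_eq_zero (hy : y ∈ ℬ g) (hxy : x * y = 0) (k : G) :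
    homogeneousComponent ℬ k x * y = 0 := by
  rw [← homogeneousComponent_mul_right ℬ hy, hxy, map_zero]

lemma mul_homogeneousComponent_eq_zero (hx : x ∈ ℬ g) (hxy : x * y = 0) (k : G) :
    x * homogeneousComponent ℬ k y = 0 := by
  rw [← homogeneousComponent_mul_left ℬ hx, hxy, map_zero]

lemma homogeneousComponent_mul_eq {h : G} {z : R} (hy : y ∈ ℬ h) (hz : z ∈ ℬ (g * h))
    (hxy : x * y = z) : homogeneousComponent ℬ g x * y = z := by
  rw [← homogeneousComponent_mul_right ℬ hy, hxy, homogeneousComponent_of_mem ℬ hz]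

end IsMulGraded

end MulGraded

section GradedSimple

variable {G F R : Type*} [DecidableEq G] [Field F] [NonUnitalRing R] [Module F R]
  {ℬ : G → Submodule F R} [Decomposition ℬ]

/-- The graded algebra `R` is graded simple: its multiplication is not zero and its only
homogeneous two-sided ideals are `⊥` and `⊤`. -/
structure IsGradedSimple_s15 (ℬ : G → Submodule F R) [Decomposition ℬ] : Prop where
  exists_mul_ne_zero : ∃ x y : R, x * y ≠ 0
  eq_bot_or_eq_top : ∀ J : TwoSidedIdeal R, SetLike.IsHomogeneous ℬ J → J = ⊥ ∨ J = ⊤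

/-- `L` is a graded left ideal. It is encoded as a subspace because `R` need not be unital. -/
structure IsGradedLeftIdeal_s15 (ℬ : G → Submodule F R) [Decomposition ℬ] (L : Submodule F R) :
    Prop where
  mul_mem : ∀ (r : R) {x : R}, x ∈ L → r * x ∈ L
  component_mem : ∀ (g : G) {x : R}, x ∈ L → homogeneousComponent ℬ g x ∈ L

/-- `L` is minimal among the nonzero graded left ideals. -/
def IsMinimalGradedLeftIdeal (ℬ : G → Submodule F R) [Decomposition ℬ] (L : Submodule F R) :
    Prop :=
  Minimal (fun L' => IsGradedLeftIdeal_s15 ℬ L' ∧ L' ≠ ⊥) L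

namespace IsGradedLeftIdeal_s15

variable {L : Submodule F R}

variable (ℬ) in
lemma top : IsGradedLeftIdeal_s15 ℬ ⊤ := ⟨fun _ _ _ => trivial, fun _ _ _ => trivial⟩

/-- The left annihilator of a graded left ideal, as a two-sided ideal. -/
def annihilator_s15 (hL : IsGradedLeftIdeal_s15 ℬ L) : TwoSidedIdeal R :=
  .mk' {x | ∀ y ∈ L, x * y = 0}
    (fun y _ => zero_mul y)
    (fun hx hx' y hy => by rw [add_mul, hx y hy, hx' y hy, add_zero])
    (fun hx y hy => by rw [neg_mul, hx y hy, neg_zero])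
    (fun hx y hy => by rw [mul_assoc, hx y hy, mul_zero])
    (fun hx y hy => by rw [mul_assoc, hx _ (hL.mul_mem _ hy)])

lemma mem_annihilator_s15 (hL : IsGradedLeftIdeal_s15 ℬ L) {x : R} :
    x ∈ hL.annihilator_s15 ↔ ∀ y ∈ L, x * y = 0 :=
  TwoSidedIdeal.mem_mk' ..

variable [Group G] [IsMulGraded ℬ]

lemma annihilator_isHomogeneous (hL : IsGradedLeftIdeal_s15 ℬ L) :
    SetLike.IsHomogeneous ℬ hL.annihilator_s15 := by
  classical
  intro g x hx
  rw [mem_annihilator_s15] at hx ⊢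
  intro y hy
  rw [← sum_support_decompose ℬ y, Finset.mul_sum]
  exact Finset.sum_eq_zero fun h _ => IsMulGraded.homogeneousComponent_mul_eq_zero ℬ
    (homogeneousComponent_mem ℬ h y) (hx _ (hL.component_mem h hy)) g

variable [IsScalarTower F R R]

lemma map_mulRight_s15 (hL : IsGradedLeftIdeal_s15 ℬ L) {g : G} {b : R} (hb : b ∈ ℬ g) :
    IsGradedLeftIdeal_s15 ℬ (L.map (LinearMap.mulRight F b)) where
  mul_mem := by
    rintro r _ ⟨x, hx, rfl⟩
    exact ⟨r * x, hL.mul_mem r hx, mul_assoc r x b⟩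
  component_mem := by
    rintro k _ ⟨x, hx, rfl⟩
    refine ⟨_, hL.component_mem (k * g⁻¹) hx, ?_⟩
    have hxb := IsMulGraded.homogeneousComponent_mul_right ℬ hb (k * g⁻¹) x
    rw [inv_mul_cancel_right] at hxb
    exact hxb.symm

lemma inf_ker_mulRight (hL : IsGradedLeftIdeal_s15 ℬ L) {g : G} {b : R} (hb : b ∈ ℬ g) :
    IsGradedLeftIdeal_s15 ℬ (L ⊓ (LinearMap.mulRight F b).ker) where
  mul_mem := by
    rintro r x ⟨hx, hxb : x * b = 0⟩
    exact ⟨hL.mul_mem r hx, show r * x * b = 0 by rw [mul_assoc, hxb, mul_zero]⟩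
  component_mem := by
    rintro k x ⟨hx, hxb⟩
    exact ⟨hL.component_mem k hx,
      IsMulGraded.homogeneousComponent_mul_eq_zero ℬ hb hxb k⟩

end IsGradedLeftIdeal_s15

namespace IsGradedSimple_s15

variable [Group G] [IsMulGraded ℬ] {L : Submodule F R}

lemma annihilator_eq_bot (hR : IsGradedSimple_s15 ℬ) (hL : IsGradedLeftIdeal_s15 ℬ L)
    (hRL : ∃ r, ∃ y ∈ L, r * y ≠ 0) : hL.annihilator_s15 = ⊥ := by
  obtain ⟨r, y, hy, hry⟩ := hRL
  refine (hR.eq_bot_or_eq_top _ hL.annihilator_isHomogeneous).resolve_right fun htop => hry ?_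
  exact hL.mem_annihilator_s15.mp (htop ▸ TwoSidedIdeal.mem_top R) y hy

lemma eq_zero_of_forall_mul_eq_zero (hR : IsGradedSimple_s15 ℬ) {x : R} (hx : ∀ r, x * r = 0) :
    x = 0 := by
  obtain ⟨r, s, hrs⟩ := hR.exists_mul_ne_zero
  have hbot := hR.annihilator_eq_bot (.top ℬ) ⟨r, s, trivial, hrs⟩
  rw [← TwoSidedIdeal.mem_bot R, ← hbot]
  exact (IsGradedLeftIdeal_s15.top ℬ).mem_annihilator_s15.mpr fun r _ => hx r

lemma eq_zero_of_forall_mul_left_eq_zero (hR : IsGradedSimple_s15 ℬ) {x : R} (hx : ∀ r, r * x = 0) :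
    x = 0 := by
  classical
  let J : TwoSidedIdeal R := .mk' {x | ∀ r, r * x = 0} mul_zero
    (fun hx hy r => by rw [mul_add, hx, hy, add_zero])
    (fun hx r => by rw [mul_neg, hx, neg_zero])
    (fun hx r => by rw [← mul_assoc, hx])
    (fun hx r => by rw [← mul_assoc, hx, zero_mul])
  have mem_J {x : R} : x ∈ J ↔ ∀ r, r * x = 0 := TwoSidedIdeal.mem_mk' ..
  have hJ : SetLike.IsHomogeneous ℬ J := by
    intro g x hx
    rw [mem_J] at hx ⊢
    intro r
    rw [← sum_support_decompose ℬ r, Finset.sum_mul]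
    exact Finset.sum_eq_zero fun h _ => IsMulGraded.mul_homogeneousComponent_eq_zero ℬ
      (homogeneousComponent_mem ℬ h r) (hx _) g
  obtain ⟨r, s, hrs⟩ := hR.exists_mul_ne_zero
  have hbot : J = ⊥ := (hR.eq_bot_or_eq_top J hJ).resolve_right fun htop =>
    hrs (mem_J.mp (htop ▸ TwoSidedIdeal.mem_top R) r)
  exact (TwoSidedIdeal.mem_bot R).mp (hbot ▸ mem_J.mpr hx)

variable [SMulCommClass F R R] [IsScalarTower F R R]

lemma exists_mul_mul_ne_zero (hR : IsGradedSimple_s15 ℬ) {a b : R} {g : G} (hb : b ∈ ℬ g)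
    (ha0 : a ≠ 0) (hb0 : b ≠ 0) : ∃ h, ∃ r ∈ ℬ h, a * r * b ≠ 0 := by
  have hRb : IsGradedLeftIdeal_s15 ℬ ((⊤ : Submodule F R).map (LinearMap.mulRight F b)) :=
    (IsGradedLeftIdeal_s15.top ℬ).map_mulRight_s15 hb
  obtain ⟨s, hsb⟩ : ∃ s, s * b ≠ 0 := by
    contrapose! hb0
    exact hR.eq_zero_of_forall_mul_left_eq_zero hb0
  obtain ⟨r, hrsb⟩ : ∃ r, r * (s * b) ≠ 0 := by
    contrapose! hsb
    exact hR.eq_zero_of_forall_mul_left_eq_zero hsb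
  have hann := hR.annihilator_eq_bot hRb ⟨r, s * b, ⟨s, trivial, rfl⟩, hrsb⟩
  refine exists_mem_map_ne_zero ℬ (f := LinearMap.mulRight F b ∘ₗ LinearMap.mulLeft F a) ?_
  contrapose! ha0
  rw [← TwoSidedIdeal.mem_bot R, ← hann, hRb.mem_annihilator_s15]
  rintro _ ⟨r, -, rfl⟩
  exact (mul_assoc a r b).symm.trans (LinearMap.congr_fun ha0 r)

end IsGradedSimple_s15

end GradedSimple

section MinimalLeftIdeal

variable {G F R : Type*} [DecidableEq G] [Field F] [NonUnitalRing R] [Module F R]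
  {ℬ : G → Submodule F R} [Decomposition ℬ] {L : Submodule F R}

lemma exists_isMinimalGradedLeftIdeal [IsArtinian F R] [Nontrivial R] :
    ∃ L, IsMinimalGradedLeftIdeal ℬ L := by
  obtain ⟨L, -, hL⟩ := exists_minimal_le_of_wellFoundedLT
    (fun L' : Submodule F R => IsGradedLeftIdeal_s15 ℬ L' ∧ L' ≠ ⊥) ⊤ ⟨.top ℬ, top_ne_bot⟩
  exact ⟨L, hL⟩

namespace IsMinimalGradedLeftIdeal

variable [Group G] [IsMulGraded ℬ] [IsScalarTower F R R] {g : G} {b : R}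

lemma map_mulRight_eq (hL : IsMinimalGradedLeftIdeal ℬ L) (hb : b ∈ ℬ g) (hbL : b ∈ L)
    (hLb : ∃ x ∈ L, x * b ≠ 0) : L.map (LinearMap.mulRight F b) = L := by
  obtain ⟨x, hx, hxb⟩ := hLb
  refine hL.eq_of_le ⟨hL.prop.1.map_mulRight_s15 hb, ?_⟩ ?_
  · exact (Submodule.ne_bot_iff _).mpr ⟨x * b, ⟨x, hx, rfl⟩, hxb⟩
  · rintro _ ⟨y, -, rfl⟩
    exact hL.prop.1.mul_mem y hbL

lemma eq_zero_of_mul_eq_zero (hL : IsMinimalGradedLeftIdeal ℬ L) (hb : b ∈ ℬ g)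
    (hLb : ∃ x ∈ L, x * b ≠ 0) {y : R} (hy : y ∈ L) (hyb : y * b = 0) : y = 0 := by
  obtain ⟨x, hx, hxb⟩ := hLb
  by_contra hy0
  have hker : L ⊓ (LinearMap.mulRight F b).ker = L :=
    hL.eq_of_le ⟨hL.prop.1.inf_ker_mulRight hb,
      (Submodule.ne_bot_iff _).mpr ⟨y, ⟨hy, hyb⟩, hy0⟩⟩ inf_le_left
  exact hxb (inf_eq_left.mp hker hx)

lemma exists_homogeneous_right_identity [SMulCommClass F R R] (hL : IsMinimalGradedLeftIdeal ℬ L)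
    (hR : IsGradedSimple_s15 ℬ) : ∃ e ∈ L, e ∈ ℬ 1 ∧ e ≠ 0 ∧ ∀ x ∈ L, x * e = x := by
  obtain ⟨x, hx, hx0⟩ := (Submodule.ne_bot_iff L).mp hL.prop.2
  obtain ⟨g, ha0⟩ := exists_homogeneousComponent_ne_zero ℬ hx0
  set a := homogeneousComponent ℬ g x
  have ha : a ∈ ℬ g := homogeneousComponent_mem ℬ g x
  have haL : a ∈ L := hL.prop.1.component_mem g hx
  obtain ⟨h, r, hr, hara⟩ := hR.exists_mul_mul_ne_zero ha ha0 ha0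
  have hb : r * a ∈ ℬ (h * g) := IsMulGraded.mul_mem hr ha
  have hbL : r * a ∈ L := hL.prop.1.mul_mem r haL
  have hLb : ∃ y ∈ L, y * (r * a) ≠ 0 := ⟨a, haL, by rwa [← mul_assoc]⟩
  obtain ⟨e, heL, heb : e * (r * a) = r * a⟩ : r * a ∈ L.map (LinearMap.mulRight F (r * a)) :=
    (hL.map_mulRight_eq hb hbL hLb).symm ▸ hbL
  have he₁b : homogeneousComponent ℬ 1 e * (r * a) = r * a :=
    IsMulGraded.homogeneousComponent_mul_eq ℬ hb (by rwa [one_mul]) heb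
  refine ⟨homogeneousComponent ℬ 1 e, hL.prop.1.component_mem 1 heL,
    homogeneousComponent_mem ℬ 1 e, fun he₁ => hara ?_, fun y hy => ?_⟩
  · rw [mul_assoc, ← he₁b, he₁, zero_mul, mul_zero]
  · refine sub_eq_zero.mp (hL.eq_zero_of_mul_eq_zero hb hLb (sub_mem ?_ hy) ?_)
    · exact hL.prop.1.mul_mem y (hL.prop.1.component_mem 1 heL)
    · rw [sub_mul, mul_assoc, he₁b, sub_self]

end IsMinimalGradedLeftIdeal

end MinimalLeftIdeal

/-- For a `2`-cocycle `α`, the function `a ↦ ∏ k, α a k` exhibits `α ^ |H|` as a coboundary. -/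
lemma exists_cohomologous_pow_card_eq_one {H M : Type*} [Group H] [Finite H] [CommGroup M]
    (hM : ∀ m : M, ∃ z, z ^ Nat.card H = m) {α : H → H → M}
    (hα : ∀ a b c, α a b * α (a * b) c = α b c * α a (b * c)) :
    ∃ ν : H → M, ∀ a b, (α a b * ν (a * b) / (ν a * ν b)) ^ Nat.card H = 1 := by
  have := Fintype.ofFinite H
  choose ν hν using fun a => hM (∏ k, α a k)
  refine ⟨ν, fun a b => ?_⟩
  have hshift : ∏ k, α a (b * k) = ∏ k, α a k :=
    Fintype.prod_equiv (Equiv.mulLeft b) _ _ fun _ => rfl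
  have hprod : α a b ^ Nat.card H * ∏ k, α (a * b) k = (∏ k, α a k) * ∏ k, α b k := by
    calc α a b ^ Nat.card H * ∏ k, α (a * b) k
        = ∏ k, α a b * α (a * b) k := by
          rw [Finset.prod_mul_distrib, Finset.prod_const, Finset.card_univ,
            Nat.card_eq_fintype_card]
      _ = ∏ k, α b k * α a (b * k) := Finset.prod_congr rfl fun k _ => hα a b k
      _ = (∏ k, α a k) * ∏ k, α b k := by rw [Finset.prod_mul_distrib, hshift, mul_comm]
  rw [div_pow, mul_pow, mul_pow, hν, hν, hν, hprod, div_self']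

section GradedDivision

/-- The subspaces `D g` of `R` form a graded division algebra with identity element `e`. The
identity is a parameter since the example of interest is the corner `e R e` of an idempotent. -/
structure IsGradedDivision {G F R : Type*} [Group G] [Semiring F] [NonUnitalNonAssocSemiring R]
    [Module F R] (D : G → Submodule F R) (e : R) : Prop where
  one_mem : e ∈ D 1
  one_ne_zero : e ≠ 0
  one_mul : ∀ {g x}, x ∈ D g → e * x = x
  mul_one : ∀ {g x}, x ∈ D g → x * e = x
  mul_mem : ∀ {g h x y}, x ∈ D g → y ∈ D h → x * y ∈ D (g * h)
  exists_left_inv : ∀ {g x}, x ∈ D g → x ≠ 0 → ∃ y ∈ D g⁻¹, y * x = e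

section Corner

variable (F : Type*) {G R : Type*} [Semiring F] [NonUnitalSemiring R] [Module F R]
  [SMulCommClass F R R] [IsScalarTower F R R]

/-- The corner `e R e` of an idempotent `e`, as the subspace of all elements fixed by `e` on both
sides. -/
def corner (e : R) : Submodule F R :=
  (LinearMap.mulLeft F e).eqLocus LinearMap.id ⊓ (LinearMap.mulRight F e).eqLocus LinearMap.id

variable {F}

lemma mem_corner {e x : R} : x ∈ corner F e ↔ e * x = x ∧ x * e = x := Iff.rfl

lemma mul_mem_corner {e x y : R} (hx : e * x = x) (hy : y * e = y) : x * y ∈ corner F e :=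
  mem_corner.mpr ⟨by rw [← mul_assoc, hx], by rw [mul_assoc, hy]⟩

/-- The grading that a homogeneous idempotent `e` of degree one induces on `e R e`. -/
def cornerGrading (ℬ : G → Submodule F R) (e : R) (g : G) : Submodule F R := ℬ g ⊓ corner F e

end Corner

lemma IsMinimalGradedLeftIdeal.isGradedDivision_cornerGrading {G F R : Type*} [Group G]
    [DecidableEq G] [Field F] [NonUnitalRing R] [Module F R] [SMulCommClass F R R]
    [IsScalarTower F R R] {ℬ : G → Submodule F R} [Decomposition ℬ] [IsMulGraded ℬ]
    {L : Submodule F R} (hL : IsMinimalGradedLeftIdeal ℬ L) {e : R} (heL : e ∈ L) (he : e ∈ ℬ 1)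
    (he0 : e ≠ 0) (hLe : ∀ x ∈ L, x * e = x) : IsGradedDivision (cornerGrading ℬ e) e where
  one_mem := ⟨he, hLe e heL, hLe e heL⟩
  one_ne_zero := he0
  one_mul hx := hx.2.1
  mul_one hx := hx.2.2
  mul_mem := by
    rintro g h x y ⟨hx, hex, -⟩ ⟨hy, -, hye⟩
    exact ⟨IsMulGraded.mul_mem hx hy, mul_mem_corner hex hye⟩
  exists_left_inv := by
    rintro g x ⟨hx, hex : e * x = x, hxe : x * e = x⟩ hx0
    have hxL : x ∈ L := hxe ▸ hL.prop.1.mul_mem x heL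
    obtain ⟨y, hyL, hyx : y * x = e⟩ : e ∈ L.map (LinearMap.mulRight F x) :=
      (hL.map_mulRight_eq hx hxL ⟨e, heL, by rwa [hex]⟩).symm ▸ heL
    have hzx : homogeneousComponent ℬ g⁻¹ y * x = e :=
      IsMulGraded.homogeneousComponent_mul_eq ℬ hx (by rwa [inv_mul_cancel]) hyx
    set z := homogeneousComponent ℬ g⁻¹ y
    have hze : z * e = z := hLe z (hL.prop.1.component_mem _ hyL)
    exact ⟨e * z, ⟨IsMulGraded.mul_mem_of_mem_one_left ℬ he (homogeneousComponent_mem ℬ _ y),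
      mul_mem_corner (hLe e heL) hze⟩, by rw [mul_assoc, hzx, hLe e heL]⟩

namespace IsGradedDivision

variable {G F R : Type*} [Group G] [Field F] [NonUnitalRing R] [Module F R]
  {D : G → Submodule F R} {e : R} {g h : G} {x y : R}

lemma mul_ne_zero (hD : IsGradedDivision D e) (hx : x ∈ D g) (hx0 : x ≠ 0) (hy : y ∈ D h)
    (hy0 : y ≠ 0) : x * y ≠ 0 := by
  obtain ⟨z, -, hzx⟩ := hD.exists_left_inv hx hx0
  intro hxy
  rw [← hD.one_mul hy, ← hzx, mul_assoc, hxy, mul_zero] at hy0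
  exact hy0 rfl

/-- The set of degrees with a nonzero component, as a subgroup. -/
def support (hD : IsGradedDivision D e) : Subgroup G where
  carrier := {g | D g ≠ ⊥}
  one_mem' := (Submodule.ne_bot_iff _).mpr ⟨e, hD.one_mem, hD.one_ne_zero⟩
  mul_mem' := by
    simp only [Set.mem_ofPred_eq, Submodule.ne_bot_iff]
    rintro g h ⟨x, hx, hx0⟩ ⟨y, hy, hy0⟩
    exact ⟨x * y, hD.mul_mem hx hy, hD.mul_ne_zero hx hx0 hy hy0⟩
  inv_mem' := by
    simp only [Set.mem_ofPred_eq, Submodule.ne_bot_iff]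
    rintro g ⟨x, hx, hx0⟩
    obtain ⟨y, hy, hyx⟩ := hD.exists_left_inv hx hx0
    refine ⟨y, hy, fun hy0 => hD.one_ne_zero ?_⟩
    rw [← hyx, hy0, zero_mul]

lemma mem_support (hD : IsGradedDivision D e) : g ∈ hD.support ↔ ∃ x ∈ D g, x ≠ 0 :=
  Submodule.ne_bot_iff _

variable [SMulCommClass F R R] [IsScalarTower F R R] [IsAlgClosed F] [FiniteDimensional F R]

lemma exists_smul_eq (hD : IsGradedDivision D e) (hx : x ∈ D g) (hx0 : x ≠ 0) (hy : y ∈ D g) :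
    ∃ c : F, y = c • x := by
  obtain ⟨x', hx', hx'x⟩ := hD.exists_left_inv hx hx0
  have hx'0 : x' ≠ 0 := fun h => hD.one_ne_zero (by rw [← hx'x, h, zero_mul])
  have mul_mem_one {a b : R} (ha : a ∈ D 1) (hb : b ∈ D 1) : a * b ∈ D 1 := by
    simpa only [_root_.mul_one] using hD.mul_mem ha hb
  have hx'y : x' * y ∈ D 1 := by simpa only [inv_mul_cancel] using hD.mul_mem hx' hy
  have : Nontrivial (D 1) := ⟨⟨e, hD.one_mem⟩, 0, fun h => hD.one_ne_zero (congrArg Subtype.val h)⟩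
  obtain ⟨c, hc⟩ := Module.End.exists_eigenvalue
    ((LinearMap.mulLeft F (x' * y)).restrict fun _ => mul_mem_one hx'y)
  obtain ⟨⟨z, hz⟩, hcz, hz0⟩ := hc.exists_hasEigenvector
  have hx'yz : x' * y * z = c • z := congrArg Subtype.val (Module.End.mem_eigenspace_iff.mp hcz)
  have hprod : x' * (y - c • x) * z = 0 := by
    rw [mul_sub, mul_smul_comm, hx'x, sub_mul, smul_mul_assoc, hD.one_mul hz, hx'yz, sub_self]
  have hsub : y - c • x ∈ D g := sub_mem hy (Submodule.smul_mem _ c hx)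
  refine ⟨c, sub_eq_zero.mp (by_contra fun hyx => ?_)⟩
  exact hD.mul_ne_zero (hD.mul_mem hx' hsub) (hD.mul_ne_zero hx' hx'0 hsub hyx) hz
    (fun h => hz0 (Subtype.ext h)) hprod

/-- The structure constants with respect to arbitrary nonzero homogeneous elements form a cocycle,
so the elements can be rescaled to make all structure constants roots of unity. -/
lemma exists_mul_eq_rootOfUnity_smul [Finite G] (hD : IsGradedDivision D e) :
    ∃ X : hD.support → R, (∀ a : hD.support, X a ∈ D a) ∧ (∀ a, X a ≠ 0) ∧
      ∀ a b, ∃ c : F, c ^ Nat.card G = 1 ∧ X a * X b = c • X (a * b) := by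
  choose X hX hX0 using fun a : hD.support => hD.mem_support.mp a.2
  have hmul0 (a b : hD.support) : X a * X b ≠ 0 := hD.mul_ne_zero (hX a) (hX0 a) (hX b) (hX0 b)
  have exists_unit (a b : hD.support) : ∃ c : Fˣ, X a * X b = c • X (a * b) := by
    obtain ⟨c, hc⟩ := hD.exists_smul_eq (hX (a * b)) (hX0 (a * b)) (hD.mul_mem (hX a) (hX b))
    have hc0 : c ≠ 0 := fun h => hmul0 a b (by rw [hc, h, zero_smul])
    exact ⟨Units.mk0 c hc0, hc⟩
  choose α hα using exists_unit
  have hcocycle (a b c : hD.support) : α a b * α (a * b) c = α b c * α a (b * c) := by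
    have hassoc := mul_assoc (X a) (X b) (X c)
    rw [hα a b, hα b c, smul_mul_assoc, mul_smul_comm, hα, hα, smul_smul, smul_smul,
      mul_assoc a b c] at hassoc
    exact Units.ext (smul_left_injective F (hX0 (a * (b * c))) hassoc)
  have hroots (m : Fˣ) : ∃ z, z ^ Nat.card hD.support = m := by
    obtain ⟨z, hz⟩ := IsAlgClosed.exists_pow_nat_eq (m : F) (Nat.card_pos (α := hD.support))
    have hz0 : z ≠ 0 := ne_zero_pow Nat.card_pos.ne' (hz ▸ m.ne_zero)
    exact ⟨Units.mk0 z hz0, Units.ext hz⟩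
  obtain ⟨ν, hν⟩ := exists_cohomologous_pow_card_eq_one hroots hcocycle
  refine ⟨fun a => (ν a)⁻¹ • X a, fun a => Submodule.smul_mem _ _ (hX a), fun a => ?_,
    fun a b => ⟨(α a b * ν (a * b) / (ν a * ν b) : Fˣ), ?_, ?_⟩⟩
  · exact (smul_ne_zero_iff_ne _).mpr (hX0 a)
  · obtain ⟨m, hm⟩ := hD.support.card_subgroup_dvd_card
    rw [← Units.val_pow_eq_pow_val, hm, pow_mul, hν, one_pow, Units.val_one]
  · rw [smul_mul_smul_comm, hα, smul_smul, ← Units.smul_def, smul_smul]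
    congr 1
    rw [div_mul_eq_mul_div, mul_inv_cancel_right, div_eq_inv_mul, mul_inv]

end IsGradedDivision

end GradedDivision

section MatrixFrame

variable {F R : Type*} [NonUnitalRing R] {e : R} {k : ℕ}

/-- A system of `k` columns `u i ∈ R e` and `k` rows `v i ∈ e R` that are dual to each other. It
identifies the `k × k` matrices over the corner `e R e` with the span of the elements
`u i * y * v j` of `R`. -/
structure MatrixFrame (e : R) (k : ℕ) where
  u : Fin k → R
  v : Fin k → R
  u_mul : ∀ i, u i * e = u i
  mul_v : ∀ i, e * v i = v i
  v_mul_u : ∀ i j, v i * u j = if i = j then e else 0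

namespace MatrixFrame

variable (p : MatrixFrame e k)

/-- The idempotent that corresponds to the identity matrix. -/
def total : R := ∑ i, p.u i * p.v i

lemma v_mul_total (i : Fin k) : p.v i * p.total = p.v i := by
  simp only [total, Finset.mul_sum, ← mul_assoc, p.v_mul_u, ite_mul, p.mul_v, zero_mul,
    Finset.sum_ite_eq, Finset.mem_univ, if_true]

lemma total_mul_u (i : Fin k) : p.total * p.u i = p.u i := by
  simp only [total, Finset.sum_mul, mul_assoc, p.v_mul_u, mul_ite, p.u_mul, mul_zero,
    Finset.sum_ite_eq', Finset.mem_univ, if_true]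

lemma total_mul_total : p.total * p.total = p.total := by
  nth_rw 2 3 [total]
  simp only [Finset.mul_sum, ← mul_assoc, p.total_mul_u]

/-- The matrices of the frame exhaust `R`. -/
def IsComplete : Prop := ∀ x : R, p.total * x = x ∧ x * p.total = x

/-- Adjoin a column `w` and a row obtained from `z` by orthogonalization. -/
def cons (w z : R) (hw : p.total * w = 0) (hwe : w * e = w) (hez : e * z = z) (hzw : z * w = e) :
    MatrixFrame e (k + 1) where
  u := Fin.cons w p.u
  v := Fin.cons (z - z * p.total) p.v
  u_mul := Fin.cases hwe p.u_mul
  mul_v := Fin.cases (by rw [Fin.cons_zero, mul_sub, ← mul_assoc, hez]) p.mul_v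
  v_mul_u := by
    refine Fin.cases (Fin.cases ?_ fun j => ?_) fun i => Fin.cases ?_ fun j => ?_
    · rw [Fin.cons_zero, Fin.cons_zero, sub_mul, mul_assoc, hw, hzw, mul_zero, sub_zero, if_pos rfl]
    · rw [Fin.cons_zero, Fin.cons_succ, sub_mul, mul_assoc, p.total_mul_u, sub_self,
        if_neg (Fin.succ_ne_zero j).symm]
    · rw [Fin.cons_zero, Fin.cons_succ, ← p.v_mul_total, mul_assoc, hw, mul_zero,
        if_neg (Fin.succ_ne_zero i)]
    · simp only [Fin.cons_succ, Fin.succ_inj, p.v_mul_u]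

variable [Field F] [Module F R] [SMulCommClass F R R]

variable (F) in
lemma linearIndependent_u (he : e ≠ 0) : LinearIndependent F p.u := by
  rw [Fintype.linearIndependent_iff]
  intro c hc i
  have hi : p.v i * ∑ j, c j • p.u j = c i • e := by
    simp only [Finset.mul_sum, mul_smul_comm, p.v_mul_u, smul_ite, smul_zero, Finset.sum_ite_eq,
      Finset.mem_univ, if_true]
  rw [hc, mul_zero, eq_comm, smul_eq_zero] at hi
  exact hi.resolve_right he

/-- The matrix with the single nonzero entry `Y a`, in position `(i, j)`. -/
def matrixUnit {κ : Type*} (Y : κ → R) (t : Fin k × Fin k × κ) : R :=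
  p.u t.1 * Y t.2.2 * p.v t.2.1

section MatrixUnit

variable {κ : Type*} {Y : κ → R}

variable {p} in
lemma span_range_matrixUnit_eq_top [IsScalarTower F R R] (hp : p.IsComplete)
    (hY : corner F e ≤ Submodule.span F (Set.range Y)) :
    Submodule.span F (Set.range (p.matrixUnit Y)) = ⊤ := by
  refine eq_top_iff.mpr fun x _ => ?_
  have hx : x = ∑ i, ∑ j, p.u i * (p.v i * x * p.u j) * p.v j :=
    calc x = p.total * x * p.total := by rw [(hp x).1, (hp x).2]
      _ = ∑ i, ∑ j, p.u i * (p.v i * x * p.u j) * p.v j := by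
        simp only [total, Finset.sum_mul, Finset.mul_sum, mul_assoc]
        exact Finset.sum_comm
  rw [hx]
  refine sum_mem fun i _ => sum_mem fun j _ => ?_
  have hmem : p.v i * x * p.u j ∈ Submodule.span F (Set.range Y) :=
    hY (mul_mem_corner (by rw [← mul_assoc, p.mul_v]) (p.u_mul j))
  refine (Submodule.map_span_le (LinearMap.mulRight F (p.v j) ∘ₗ LinearMap.mulLeft F (p.u i)) _
    _).mpr ?_ ⟨_, hmem, rfl⟩
  rintro _ ⟨a, rfl⟩
  exact Submodule.subset_span ⟨(i, j, a), rfl⟩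

lemma matrixUnit_mul_matrixUnit (hY : ∀ a, e * Y a = Y a) (i j i' j' : Fin k) (a b : κ) :
    p.matrixUnit Y (i, j, a) * p.matrixUnit Y (i', j', b) =
      if j = i' then p.u i * (Y a * Y b) * p.v j' else 0 := by
  have hmid : p.v j * (p.u i' * Y b) = if j = i' then Y b else 0 := by
    rw [← mul_assoc, p.v_mul_u, ite_mul, hY, zero_mul]
  calc p.u i * Y a * p.v j * (p.u i' * Y b * p.v j')
      = p.u i * (Y a * (p.v j * (p.u i' * Y b))) * p.v j' := by simp only [mul_assoc]
    _ = _ := by rw [hmid]; split_ifs <;> simp only [mul_zero, zero_mul]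

lemma linearIndependent_matrixUnit [IsScalarTower F R R] [Finite κ]
    (hYe : ∀ a, Y a ∈ corner F e) (hY : LinearIndependent F Y) :
    LinearIndependent F (p.matrixUnit Y) := by
  have := Fintype.ofFinite κ
  rw [Fintype.linearIndependent_iff] at hY ⊢
  rintro c hc ⟨i, j, a⟩
  have entry (i' j' : Fin k) (b : κ) : p.v i * p.matrixUnit Y (i', j', b) * p.u j =
      if i = i' then if j' = j then Y b else 0 else 0 := by
    calc p.v i * (p.u i' * Y b * p.v j') * p.u j
        = p.v i * p.u i' * Y b * (p.v j' * p.u j) := by simp only [mul_assoc]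
      _ = _ := by
        obtain ⟨heY, hYe'⟩ := mem_corner.mp (hYe b)
        rw [p.v_mul_u, p.v_mul_u, ite_mul, ite_mul, heY, mul_ite, hYe', mul_zero, zero_mul,
          zero_mul]
  refine hY (fun b => c (i, j, b)) ?_ a
  calc ∑ b, c (i, j, b) • Y b
      = p.v i * (∑ t, c t • p.matrixUnit Y t) * p.u j := by
        simp only [Finset.mul_sum, Finset.sum_mul, mul_smul_comm, smul_mul_assoc,
          Fintype.sum_prod_type, entry, smul_ite, smul_zero, Finset.sum_ite_irrel,
          Finset.sum_const_zero, Finset.sum_ite_eq, Finset.sum_ite_eq', Finset.mem_univ, if_true]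
    _ = 0 := by rw [hc, mul_zero, zero_mul]

end MatrixUnit

end MatrixFrame

end MatrixFrame

section HomogeneousFrame

variable {G F R : Type*} [Group G] [Field F] [NonUnitalRing R] [Module F R]
  {ℬ : G → Submodule F R} {e : R} {k : ℕ}

/-- Every column of the frame is homogeneous, and the dual row is homogeneous of the inverse
degree. -/
def MatrixFrame.IsHomogeneous (ℬ : G → Submodule F R) (p : MatrixFrame e k) : Prop :=
  ∀ i, ∃ g, p.u i ∈ ℬ g ∧ p.v i ∈ ℬ g⁻¹

lemma MatrixFrame.IsHomogeneous.total_mem [IsMulGraded ℬ] {p : MatrixFrame e k}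
    (hp : p.IsHomogeneous ℬ) : p.total ∈ ℬ 1 := by
  refine sum_mem fun i _ => ?_
  obtain ⟨g, hu, hv⟩ := hp i
  exact IsMulGraded.mul_mem_one ℬ hu hv

namespace IsGradedSimple_s15

variable [DecidableEq G] [Decomposition ℬ] [IsMulGraded ℬ] {p : MatrixFrame e k}

lemma isComplete_of_total_mul (hR : IsGradedSimple_s15 ℬ) (hp : ∀ x, p.total * x = x) :
    p.IsComplete := by
  refine fun x => ⟨hp x, sub_eq_zero.mp (hR.eq_zero_of_forall_mul_eq_zero fun r => ?_)⟩
  rw [sub_mul, mul_assoc, hp, sub_self]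

variable [SMulCommClass F R R] [IsScalarTower F R R]

lemma exists_dual_row (hR : IsGradedSimple_s15 ℬ)
    (hD : IsGradedDivision (cornerGrading ℬ e) e) {g : G} {w : R} (hw : w ∈ ℬ g) (hw0 : w ≠ 0)
    (hwe : w * e = w) : ∃ z ∈ ℬ g⁻¹, e * z = z ∧ z * w = e := by
  obtain ⟨h, r, hr, herw⟩ := hR.exists_mul_mul_ne_zero hw hD.one_ne_zero hw0
  have he : e ∈ ℬ 1 := hD.one_mem.1
  have her : e * r ∈ ℬ h := IsMulGraded.mul_mem_of_mem_one_left ℬ he hr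
  have hmem : e * r * w ∈ cornerGrading ℬ e (h * g) :=
    ⟨IsMulGraded.mul_mem her hw,
      mul_mem_corner (by rw [← mul_assoc, hD.one_mul hD.one_mem]) hwe⟩
  obtain ⟨y, hy, hyw⟩ := hD.exists_left_inv hmem herw
  refine ⟨y * (e * r), ?_, by rw [← mul_assoc, hD.one_mul hy], by rw [mul_assoc, hyw]⟩
  simpa only [mul_inv_rev, inv_mul_cancel_right] using IsMulGraded.mul_mem hy.1 her

lemma exists_homogeneous_frame_succ (hR : IsGradedSimple_s15 ℬ)
    (hD : IsGradedDivision (cornerGrading ℬ e) e) (hp : p.IsHomogeneous ℬ)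
    (hpc : ¬ p.IsComplete) : ∃ q : MatrixFrame e (k + 1), q.IsHomogeneous ℬ := by
  obtain ⟨g, x, hx, ha0⟩ : ∃ g, ∃ x ∈ ℬ g, x - p.total * x ≠ 0 := by
    refine exists_mem_map_ne_zero ℬ (f := LinearMap.id - LinearMap.mulLeft F p.total) fun h =>
      hpc (hR.isComplete_of_total_mul fun x => ?_)
    exact (sub_eq_zero.mp (LinearMap.congr_fun h x)).symm
  have ha : x - p.total * x ∈ ℬ g :=
    sub_mem hx (IsMulGraded.mul_mem_of_mem_one_left ℬ hp.total_mem hx)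
  have he : e ∈ ℬ 1 := hD.one_mem.1
  obtain ⟨h, r, hr, hw0⟩ := hR.exists_mul_mul_ne_zero he ha0 hD.one_ne_zero
  set w := (x - p.total * x) * r * e
  have hw : w ∈ ℬ (g * h) :=
    IsMulGraded.mul_mem_of_mem_one_right ℬ (IsMulGraded.mul_mem ha hr) he
  have htw : p.total * w = 0 := by
    rw [← mul_assoc, ← mul_assoc, mul_sub, ← mul_assoc, p.total_mul_total, sub_self, zero_mul,
      zero_mul]
  have hwe : w * e = w := by rw [mul_assoc, hD.one_mul hD.one_mem]
  obtain ⟨z, hz, hez, hzw⟩ := hR.exists_dual_row hD hw hw0 hwe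
  have hzt : z - z * p.total ∈ ℬ (g * h)⁻¹ :=
    sub_mem hz (IsMulGraded.mul_mem_of_mem_one_right ℬ hz hp.total_mem)
  exact ⟨p.cons w z htw hwe hez hzw, Fin.cases ⟨g * h, hw, hzt⟩ hp⟩

lemma exists_complete_homogeneous_frame [FiniteDimensional F R] (hR : IsGradedSimple_s15 ℬ)
    (hD : IsGradedDivision (cornerGrading ℬ e) e) :
    ∃ k, ∃ p : MatrixFrame e k, p.IsHomogeneous ℬ ∧ p.IsComplete := by
  by_contra! hcon
  have hall (k : ℕ) : ∃ p : MatrixFrame e k, p.IsHomogeneous ℬ := by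
    induction k with
    | zero => exact ⟨⟨Fin.elim0, Fin.elim0, Fin.rec0, Fin.rec0, Fin.rec0⟩, Fin.rec0⟩
    | succ k ih =>
      obtain ⟨p, hp⟩ := ih
      exact hR.exists_homogeneous_frame_succ hD hp (hcon k p hp)
  obtain ⟨p, -⟩ := hall (Module.finrank F R + 1)
  have hle := (p.linearIndependent_u F hD.one_ne_zero).fintype_card_le_finrank
  rw [Fintype.card_fin] at hle
  omega

end IsGradedSimple_s15

end HomogeneousFrame

section MonomialBasis

variable {G F R : Type*} [Field F] [NonUnitalRing R] [Module F R]

/-- The basis `b` is homogeneous, and the product of any two of its elements is a scalar in `S`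
times a third one. -/
structure IsMonomialBasis {κ : Type*} (ℬ : G → Submodule F R) (S : Set F)
    (b : Module.Basis κ F R) : Prop where
  exists_mem : ∀ i, ∃ g, b i ∈ ℬ g
  exists_mul_eq : ∀ i j, ∃ c ∈ S, ∃ l, b i * b j = c • b l

lemma IsMonomialBasis.repr_mul_mem {κ : Type*} {ℬ : G → Submodule F R} {S : Set F}
    {b : Module.Basis κ F R} (hb : IsMonomialBasis ℬ S b) (h0 : 0 ∈ S) (i j l : κ) :
    b.repr (b i * b j) l ∈ S := by
  classical
  obtain ⟨c, hc, m, hm⟩ := hb.exists_mul_eq i j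
  rw [hm, map_smul, b.repr_self, Finsupp.smul_single, smul_eq_mul, mul_one, Finsupp.single_apply]
  split_ifs
  exacts [hc, h0]

lemma IsMonomialBasis.reindex {κ κ' : Type*} {ℬ : G → Submodule F R} {S : Set F}
    {b : Module.Basis κ F R} (hb : IsMonomialBasis ℬ S b) (f : κ ≃ κ') :
    IsMonomialBasis ℬ S (b.reindex f) where
  exists_mem i := by simpa only [b.reindex_apply] using hb.exists_mem (f.symm i)
  exists_mul_eq i j := by
    obtain ⟨c, hc, l, hl⟩ := hb.exists_mul_eq (f.symm i) (f.symm j)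
    exact ⟨c, hc, f l, by simpa only [b.reindex_apply, f.symm_apply_apply] using hl⟩

variable [Group G] [DecidableEq G] [SMulCommClass F R R] [IsScalarTower F R R]
  {ℬ : G → Submodule F R} [Decomposition ℬ] [IsMulGraded ℬ] {e : R}

namespace IsGradedDivision

lemma corner_le_span_range [IsAlgClosed F] [FiniteDimensional F R]
    (hD : IsGradedDivision (cornerGrading ℬ e) e) {X : hD.support → R}
    (hX : ∀ a : hD.support, X a ∈ cornerGrading ℬ e a) (hX0 : ∀ a, X a ≠ 0) :
    corner F e ≤ Submodule.span F (Set.range X) := by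
  rintro x ⟨hex : e * x = x, hxe : x * e = x⟩
  have he : e ∈ ℬ 1 := hD.one_mem.1
  have hcomp (g : G) : homogeneousComponent ℬ g x ∈ cornerGrading ℬ e g := by
    have hl := IsMulGraded.homogeneousComponent_mul_left ℬ he g x
    have hr := IsMulGraded.homogeneousComponent_mul_right ℬ he g x
    rw [_root_.one_mul, hex] at hl
    rw [_root_.mul_one, hxe] at hr
    exact ⟨homogeneousComponent_mem ℬ g x, mem_corner.mpr ⟨hl.symm, hr.symm⟩⟩
  refine mem_of_forall_homogeneousComponent_mem ℬ fun g => ?_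
  by_cases hg0 : homogeneousComponent ℬ g x = 0
  · exact hg0 ▸ zero_mem _
  have hgs : g ∈ hD.support := hD.mem_support.mpr ⟨_, hcomp g, hg0⟩
  obtain ⟨c, hc⟩ := hD.exists_smul_eq (hX ⟨g, hgs⟩) (hX0 ⟨g, hgs⟩) (hcomp g)
  exact hc ▸ Submodule.smul_mem _ c (Submodule.subset_span ⟨⟨g, hgs⟩, rfl⟩)

end IsGradedDivision

lemma IsGradedSimple_s15.exists_isMonomialBasis [Finite G] [IsAlgClosed F] [FiniteDimensional F R]
    (hR : IsGradedSimple_s15 ℬ) :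
    ∃ b : Module.Basis (Fin (Module.finrank F R)) F R,
      IsMonomialBasis ℬ {c | c = 0 ∨ c ^ Nat.card G = 1} b := by
  obtain ⟨x, y, hxy⟩ := hR.exists_mul_ne_zero
  have : Nontrivial R := ⟨⟨_, _, hxy⟩⟩
  obtain ⟨L, hL⟩ := exists_isMinimalGradedLeftIdeal (ℬ := ℬ)
  obtain ⟨e, heL, he, he0, hLe⟩ := hL.exists_homogeneous_right_identity hR
  have hD := hL.isGradedDivision_cornerGrading heL he he0 hLe
  obtain ⟨k, p, hph, hpc⟩ := hR.exists_complete_homogeneous_frame hD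
  obtain ⟨X, hX, hX0, hXmul⟩ := hD.exists_mul_eq_rootOfUnity_smul
  have := Fintype.ofFinite hD.support
  let b : Module.Basis (Fin k × Fin k × hD.support) F R := .mk
    (p.linearIndependent_matrixUnit (fun a => (hX a).2)
      (linearIndependent_of_forall_mem ℬ Subtype.val_injective (fun a => (hX a).1) hX0))
    (MatrixFrame.span_range_matrixUnit_eq_top hpc (hD.corner_le_span_range hX hX0)).ge
  have hb (t) : b t = p.matrixUnit X t := Module.Basis.mk_apply ..
  have hbm : IsMonomialBasis ℬ {c | c = 0 ∨ c ^ Nat.card G = 1} b := by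
    constructor
    · rintro ⟨i, j, a⟩
      obtain ⟨g, hu, -⟩ := hph i
      obtain ⟨h, -, hv⟩ := hph j
      exact ⟨g * a * h⁻¹, hb _ ▸ IsMulGraded.mul_mem (IsMulGraded.mul_mem hu (hX a).1) hv⟩
    · rintro ⟨i, j, a⟩ ⟨i', j', a'⟩
      obtain ⟨c, hc, hcX⟩ := hXmul a a'
      rw [hb, hb, p.matrixUnit_mul_matrixUnit fun a => hD.one_mul (hX a), hcX]
      by_cases hj : j = i'
      · refine ⟨c, .inr hc, (i, j', a * a'), ?_⟩
        rw [if_pos hj, hb, mul_smul_comm, smul_mul_assoc, MatrixFrame.matrixUnit]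
      · exact ⟨0, .inl rfl, (i, j', a), by rw [if_neg hj, zero_smul]⟩
  exact ⟨_, hbm.reindex (Fintype.equivFinOfCardEq (Module.finrank_eq_card_basis b).symm)⟩

end MonomialBasis

section UnitalGradedDivision

variable {G F R : Type*} [Group G] [DecidableEq G] [Field F] [Ring R] [Algebra F R]
  {ℬ : G → Submodule F R} [Decomposition ℬ]

lemma isGradedDivision_of_forall_isUnit [Nontrivial R] [IsMulGraded ℬ] (hone : (1 : R) ∈ ℬ 1)
    (hunit : ∀ g, ∀ x ∈ ℬ g, x ≠ 0 → IsUnit x) : IsGradedDivision ℬ 1 where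
  one_mem := hone
  one_ne_zero := one_ne_zero
  one_mul _ := one_mul _
  mul_one _ := mul_one _
  mul_mem := IsMulGraded.mul_mem
  exists_left_inv {g x} hx hx0 := by
    obtain ⟨y, hyx⟩ := (hunit g x hx hx0).exists_left_inv
    exact ⟨homogeneousComponent ℬ g⁻¹ y, homogeneousComponent_mem ℬ g⁻¹ y,
      IsMulGraded.homogeneousComponent_mul_eq ℬ hx (by rwa [inv_mul_cancel]) hyx⟩

namespace IsGradedDivision

lemma isGradedSimple (hD : IsGradedDivision ℬ (1 : R)) : IsGradedSimple_s15 ℬ where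
  exists_mul_ne_zero := ⟨1, 1, (_root_.mul_one (1 : R)).symm ▸ hD.one_ne_zero⟩
  eq_bot_or_eq_top J hJ := by
    refine or_iff_not_imp_left.mpr fun hbot => ?_
    obtain ⟨x, hxJ, hx0⟩ : ∃ x ∈ J, x ≠ 0 := by
      contrapose! hbot
      exact le_bot_iff.mp fun x hx => (TwoSidedIdeal.mem_bot R).mpr (hbot x hx)
    obtain ⟨g, hg0⟩ := exists_homogeneousComponent_ne_zero ℬ hx0
    obtain ⟨y, -, hy⟩ := hD.exists_left_inv (homogeneousComponent_mem ℬ g x) hg0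
    exact J.one_mem_iff.mp (hy ▸ J.mul_mem_left _ _ (hJ g hxJ))

lemma finrank_le_card [Finite G] [IsAlgClosed F] [FiniteDimensional F R]
    (hD : IsGradedDivision ℬ (1 : R)) : Module.finrank F R ≤ Nat.card G := by
  have := Fintype.ofFinite G
  have hcomponent (g : G) : Module.finrank F (ℬ g) ≤ 1 := by
    by_cases hg : ∃ x ∈ ℬ g, x ≠ 0
    · obtain ⟨x, hx, hx0⟩ := hg
      refine finrank_le_one ⟨x, hx⟩ fun y => ?_
      obtain ⟨c, hc⟩ := hD.exists_smul_eq hx hx0 y.2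
      exact ⟨c, Subtype.ext hc.symm⟩
    · push Not at hg
      rw [(Submodule.eq_bot_iff _).mpr hg, finrank_bot]
      exact zero_le_one
  calc Module.finrank F R = ∑ g, Module.finrank F (ℬ g) := by
        rw [(decomposeLinearEquiv ℬ).finrank_eq, Module.finrank_directSum]
    _ ≤ ∑ _g : G, 1 := Finset.sum_le_sum fun g _ => hcomponent g
    _ = Nat.card G := by rw [Finset.sum_const, smul_eq_mul, _root_.mul_one, Finset.card_univ,
        Nat.card_eq_fintype_card]

end IsGradedDivision

lemma exists_isMonomialBasis_of_forall_isUnit [IsMulGraded ℬ] [Finite G] [IsAlgClosed F]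
    [FiniteDimensional F R] (hone : (1 : R) ∈ ℬ 1)
    (hunit : ∀ g, ∀ x ∈ ℬ g, x ≠ 0 → IsUnit x) :
    Module.finrank F R ≤ Nat.card G ∧ ∃ b : Module.Basis (Fin (Module.finrank F R)) F R,
      IsMonomialBasis ℬ {c | c = 0 ∨ c ^ Nat.card G = 1} b := by
  rcases subsingleton_or_nontrivial R with _ | _
  · have hrank : Module.finrank F R = 0 := Module.finrank_zero_of_subsingleton
    have : IsEmpty (Fin (Module.finrank F R)) := hrank ▸ Fin.isEmpty
    exact ⟨hrank ▸ Nat.zero_le _, Module.finBasis F R, isEmptyElim, isEmptyElim⟩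
  · have hD := isGradedDivision_of_forall_isUnit hone hunit
    exact ⟨hD.finrank_le_card, hD.isGradedSimple.exists_isMonomialBasis⟩

end UnitalGradedDivision

section Models

lemma equivFun_basis {ι F M : Type*} [Finite ι] [Semiring F] [AddCommMonoid M] [Module F M]
    (b : Module.Basis ι F M) (i : ι) : b.equivFun (b i) = Pi.basisFun F ι i := by
  classical
  ext l
  simp only [b.equivFun_self, Pi.basisFun_apply, Pi.single_apply, eq_comm]

variable {G : Type v} [Group G] {F : Type u} [Field F]

namespace GradedAlgModel

/-- The bilinear multiplication on `F^m` with structure constants `c` in the standard basis. -/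
noncomputable def mulOfStructureConstants {m : ℕ} (c : Fin m → Fin m → Fin m → F) :
    (Fin m → F) →ₗ[F] (Fin m → F) →ₗ[F] (Fin m → F) :=
  (Pi.basisFun F (Fin m)).constr F fun i => (Pi.basisFun F (Fin m)).constr F (c i)

lemma mulOfStructureConstants_basisFun {m : ℕ} (c : Fin m → Fin m → Fin m → F) (i j : Fin m) :
    mulOfStructureConstants c (Pi.basisFun F (Fin m) i) (Pi.basisFun F (Fin m) j) = c i j := by
  rw [mulOfStructureConstants, Module.Basis.constr_basis, Module.Basis.constr_basis]

/-- The model with structure constants `c` and basis vectors of degrees `deg`. -/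
noncomputable def ofStructureConstants {m : ℕ} (c : Fin m → Fin m → Fin m → F) (deg : Fin m → G) :
    GradedAlgModel G F where
  dim := m
  mul := mulOfStructureConstants c
  grading g := Submodule.span F (Pi.basisFun F (Fin m) '' {i | deg i = g})

/-- The `m`-dimensional models with a homogeneous basis whose structure constants lie in `S`. -/
def withConstantsIn (G : Type v) [Group G] (S : Set F) (m : ℕ) : Set (GradedAlgModel G F) :=
  Set.range fun p : (Fin m → Fin m → Fin m → S) × (Fin m → G) =>
    ofStructureConstants (fun i j l => (p.1 i j l : F)) p.2

lemma finite_withConstantsIn [Finite G] {S : Set F} (hS : S.Finite) (m : ℕ) :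
    (withConstantsIn G S m).Finite := by
  have := hS.to_subtype
  exact Set.finite_range _

end GradedAlgModel

variable {R : Type u} [NonUnitalRing R] [Module F R] {ℬ : G → Submodule F R} {m : ℕ}
  {b : Module.Basis (Fin m) F R}

variable [SMulCommClass F R R] [IsScalarTower F R R]

lemma equivFun_mul (b : Module.Basis (Fin m) F R) (x y : R) :
    b.equivFun (x * y) = GradedAlgModel.mulOfStructureConstants
      (fun i j l => b.repr (b i * b j) l) (b.equivFun x) (b.equivFun y) := by
  suffices h : (LinearMap.mul F R).compr₂ b.equivFun.toLinearMap =
      (GradedAlgModel.mulOfStructureConstants fun i j l => b.repr (b i * b j) l).compl₁₂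
        b.equivFun.toLinearMap b.equivFun.toLinearMap from LinearMap.congr_fun₂ h x y
  refine b.ext fun i => b.ext fun j => ?_
  simp only [LinearMap.compr₂_apply, LinearMap.compl₁₂_apply, LinearEquiv.coe_coe, equivFun_basis,
    GradedAlgModel.mulOfStructureConstants_basisFun]
  rfl

variable [DecidableEq G] [Decomposition ℬ]

lemma isGradedIsoToModel_ofStructureConstants {deg : Fin m → G} (hdeg : ∀ i, b i ∈ ℬ (deg i)) :
    IsGradedIsoToModel R ℬ
      (.ofStructureConstants (fun i j l => b.repr (b i * b j) l) deg) := by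
  refine ⟨b.equivFun, equivFun_mul b, fun g => ?_⟩
  rw [eq_span_image_of_span_range_eq_top ℬ b.span_eq hdeg g, Submodule.map_span, ← Set.image_comp]
  exact congrArg _ (Set.image_congr fun i _ => equivFun_basis b i)

lemma IsMonomialBasis.exists_isGradedIsoToModel {S : Set F} (hb : IsMonomialBasis ℬ S b)
    (h0 : 0 ∈ S) : ∃ s ∈ GradedAlgModel.withConstantsIn G S m, IsGradedIsoToModel R ℬ s := by
  choose deg hdeg using hb.exists_mem
  exact ⟨_, ⟨⟨fun i j l => ⟨_, hb.repr_mul_mem h0 i j l⟩, deg⟩, rfl⟩,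
    isGradedIsoToModel_ofStructureConstants hdeg⟩

end Models

lemma finite_setOf_eq_zero_or_pow_eq_one (F : Type*) [CommRing F] [IsDomain F] {n : ℕ}
    (hn : 0 < n) : {c : F | c = 0 ∨ c ^ n = 1}.Finite := by
  have hroots : {c : F | c ^ n = 1}.Finite :=
    (Polynomial.nthRootsFinset n (1 : F)).finite_toSet.subset fun _ hc =>
      (Polynomial.mem_nthRootsFinset hn 1).mpr hc
  exact (Set.finite_singleton 0).union hroots

theorem stmt_15_general {G : Type v} [Group G] [Finite G] [DecidableEq G]
    {F : Type u} [Field F] [IsAlgClosed F] :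
    (∃ T : Set (GradedAlgModel G F), T.Finite ∧
      ∀ (R : Type u) [Ring R] [Algebra F R] [FiniteDimensional F R]
        (ℬ : G → Submodule F R) [DirectSum.Decomposition ℬ],
        (∀ g h : G, ∀ x ∈ ℬ g, ∀ y ∈ ℬ h, x * y ∈ ℬ (g * h)) →
        (1 : R) ∈ ℬ (1 : G) →
        (∀ g : G, ∀ x ∈ ℬ g, x ≠ 0 → IsUnit x) →
        ∃ s ∈ T, IsGradedIsoToModel R ℬ s) ∧
    ∀ n : ℕ,
      ∃ T : Set (GradedAlgModel G F), T.Finite ∧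
        ∀ (R : Type u) [NonUnitalRing R] [Module F R] [SMulCommClass F R R]
          [IsScalarTower F R R] [FiniteDimensional F R]
          (ℬ : G → Submodule F R) [DirectSum.Decomposition ℬ],
          (∀ g h : G, ∀ x ∈ ℬ g, ∀ y ∈ ℬ h, x * y ∈ ℬ (g * h)) →
          Module.finrank F R = n →
          (∃ x y : R, x * y ≠ 0) →
          (∀ J : TwoSidedIdeal R,
            (∀ x ∈ J, ∀ g : G, ((DirectSum.decompose ℬ x) g : R) ∈ J) → J = ⊥ ∨ J = ⊤) →
          ∃ s ∈ T, IsGradedIsoToModel R ℬ s := by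
  let models := GradedAlgModel.withConstantsIn G {c : F | c = 0 ∨ c ^ Nat.card G = 1}
  have hfinite (n : ℕ) : (models n).Finite :=
    GradedAlgModel.finite_withConstantsIn (finite_setOf_eq_zero_or_pow_eq_one F Nat.card_pos) n
  refine ⟨⟨⋃ n ∈ Set.Iic (Nat.card G), models n, (Set.finite_Iic _).biUnion fun n _ => hfinite n,
    fun R _ _ _ ℬ _ hmul hone hunit => ?_⟩, fun n => ⟨models n, hfinite n, ?_⟩⟩
  · have : IsMulGraded ℬ := ⟨fun hx hy => hmul _ _ _ hx _ hy⟩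
    obtain ⟨hcard, b, hb⟩ := exists_isMonomialBasis_of_forall_isUnit hone hunit
    obtain ⟨s, hs, hiso⟩ := hb.exists_isGradedIsoToModel (.inl rfl)
    exact ⟨s, Set.mem_biUnion hcard hs, hiso⟩
  · rintro R _ _ _ _ _ ℬ _ hmul rfl hmul0 hideal
    have : IsMulGraded ℬ := ⟨fun hx hy => hmul _ _ _ hx _ hy⟩
    have hR : IsGradedSimple_s15 ℬ := ⟨hmul0, fun J hJ => hideal J fun x hx g => hJ g hx⟩
    obtain ⟨b, hb⟩ := hR.exists_isMonomialBasis
    exact hb.exists_isGradedIsoToModel (.inl rfl)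

/-- For a finite group `G` whose order is invertible in an algebraically closed field
`F`: (i) there are, up to graded isomorphism, only finitely many finite-dimensional
`G`-graded division algebras over `F`; (ii) for every `n ≥ 1` there are, up to graded
isomorphism, only finitely many `n`-dimensional `G`-graded simple algebras over `F`. -/
theorem stmt_15 {G : Type v} [Group G] [Finite G] [DecidableEq G]
    {F : Type u} [Field F] [IsAlgClosed F]
    (hcard : IsUnit ((Nat.card G : F))) :
    -- (i) finitely many graded division algebras:
    (∃ T : Set (GradedAlgModel G F), T.Finite ∧
      ∀ (R : Type u) [Ring R] [Algebra F R] [FiniteDimensional F R]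
        (ℬ : G → Submodule F R) [DirectSum.Decomposition ℬ],
        (∀ g h : G, ∀ x ∈ ℬ g, ∀ y ∈ ℬ h, x * y ∈ ℬ (g * h)) →
        (1 : R) ∈ ℬ (1 : G) →
        (∀ g : G, ∀ x ∈ ℬ g, x ≠ 0 → IsUnit x) →
        ∃ s ∈ T, IsGradedIsoToModel R ℬ s) ∧
    -- (ii) for each `n ≥ 1`, finitely many `n`-dimensional graded simple algebras:
    ∀ n : ℕ, 1 ≤ n →
      ∃ T : Set (GradedAlgModel G F), T.Finite ∧
        ∀ (R : Type u) [NonUnitalRing R] [Module F R] [SMulCommClass F R R]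
          [IsScalarTower F R R] [FiniteDimensional F R]
          (ℬ : G → Submodule F R) [DirectSum.Decomposition ℬ],
          (∀ g h : G, ∀ x ∈ ℬ g, ∀ y ∈ ℬ h, x * y ∈ ℬ (g * h)) →
          Module.finrank F R = n →
          (∃ x y : R, x * y ≠ 0) →
          (∀ J : TwoSidedIdeal R,
            (∀ x ∈ J, ∀ g : G, ((DirectSum.decompose ℬ x) g : R) ∈ J) → J = ⊥ ∨ J = ⊤) →
          ∃ s ∈ T, IsGradedIsoToModel R ℬ s :=
  ⟨stmt_15_general.1, fun n _ => stmt_15_general.2 n⟩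
end
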